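/- arXiv:1409.5023 — 2 statements merged into one kernel-verified Lean document; each statement's English description precedes it below -/
import Mathlib

section
/- With χ₊ as in the previous context and χ₋(b) = (π²/6)(30b⁸−64b⁷+80b⁶−80b⁵+76b⁴−16b³−8b²+1), the function χ defined by χ(b) = χ₋(b) for 0 < b ≤ 1/4 and χ(b) = χ₊(b) for 1/4 < b < 1/2 is C³ on (0, 1/2), but χ is not C^{3,1} at 1/4; in fact the fourth derivative of χ₊ tends to +∞ as b → 1/4⁺. -/
open Real Filter

noncomputable def chiMinus (b : ℝ) : ℝ :=
  π^2/6 * (30*b^8 - 64*b^7 + 80*b^6 - 80*b^5 + 76*b^4 - 16*b^3 - 8*b^2 + 1)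

noncomputable def chiPlus (b : ℝ) : ℝ :=
  2*π^2*b*(1 - 2*b)^3*(-2*b^3 + 3*b^2 - 6*b + 4) / (3*(1 - b)^2)
  + π*(30*b^10 - 124*b^9 + 238*b^8 - 176*b^7 - 260*b^6 + 424*b^5 - 76*b^4
        - 144*b^3 + 89*b^2 - 18*b + 1) / (6*(1 - b)^2)
      * arccos (-1 + (4*b - 1)/(2*b^2))
  + π*(1 - 2*b)*(-180*b^7 + 444*b^6 - 554*b^5 + 754*b^4 - 1214*b^3 + 922*b^2
        - 305*b + 37) / (72*(1 - b))
      * Real.sqrt (4*b - 1)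
  + 4*π*b*(1 - 2*b)^4*(7*b^2 + 2*b - 2) / (3*(1 - b)^2)
      * arctan (Real.sqrt (4*b - 1))
  + 4*π*b^2*(1 - 2*b)^4*(2 - b) / (1 - b)^2
      * arctan ((1 - 3*b)/((1 - b) * Real.sqrt (4*b - 1)))

noncomputable def chi (b : ℝ) : ℝ := if b ≤ 1/4 then chiMinus b else chiPlus b

/-!
Writing `s = √(4 * b - 1)`, both inverse trigonometric functions in `chiPlus` are affine functions
of `arctan s`, so `chiPlus - chiMinus` has the form `A(b) * (q(b) * s - arctan s)` with `A` and `q`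
rational and `A(1/4) > 0`. Dividing by `A` makes one differentiation enough to remove the
arctangent: the derivative of `q * s - arctan s` is `w(b) * (4 * b - 1) ^ 2 * s` with `w` rational
and `w(1/4) > 0`. Thus `chiPlus - chiMinus` behaves at `1/4` like a positive multiple of
`(b - 1/4) ^ (7 / 2)`. Since `√` vanishes on negative numbers, the same formulas describe `chi` on
the left of `1/4`.
-/

open scoped Topology

/-! ### Blow-up of the derivative following the last continuous one -/

/-- The function `f` is `C^n` at `a`, but its derivative of order `n + 1` tends to `+∞` on the
right of `a`. The `C^(n+1)` regularity required on the right of `a` ensures that `iteratedDeriv`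
has its intended meaning there. -/
structure DerivBlowsUpRight (n : ℕ) (f : ℝ → ℝ) (a : ℝ) : Prop where
  contDiffAt : ContDiffAt ℝ n f a
  eventually_contDiffAt : ∀ᶠ x in 𝓝[>] a, ContDiffAt ℝ (n + 1 : ℕ) f x
  tendsto_atTop : Tendsto (iteratedDeriv (n + 1) f) (𝓝[>] a) atTop

section General

variable {n : ℕ} {f g F : ℝ → ℝ} {a : ℝ}

lemma continuousAt_iteratedDeriv {i : ℕ} (hf : ContDiffAt ℝ n f a) (hi : i ≤ n) :
    ContinuousAt (iteratedDeriv i f) a := by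
  rw [iteratedDeriv_eq_equiv_comp]
  exact (LinearIsometryEquiv.continuous _).continuousAt.comp
    (hf.iteratedFDeriv_right (m := 0) (by simpa using hi)).continuousAt

lemma contDiffAt_succ_of_eventually_hasDerivAt (hF : ∀ᶠ x in 𝓝 a, HasDerivAt F (f x) x)
    (hf : ContDiffAt ℝ n f a) : ContDiffAt ℝ (n + 1 : ℕ) F a := by
  push_cast
  exact contDiffAt_succ_iff_hasFDerivAt.2 ⟨fun x => .toSpanSingleton ℝ (f x),
    ⟨_, hF, fun x hx => hx.hasFDerivAt⟩,
    (ContinuousLinearMap.toSpanSingletonCLE (𝕜 := ℝ) (E := ℝ)).contDiff.contDiffAt.comp a hf⟩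

lemma hasDerivAt_of_eventually_hasDerivAt_ne (hF : ∀ᶠ x in 𝓝[≠] a, HasDerivAt F (f x) x)
    (hFc : ContinuousAt F a) (hf : ContinuousAt f a) : HasDerivAt F (f a) a := by
  rw [← nhdsLT_sup_nhdsGT, eventually_sup] at hF
  have hlim {l : Filter ℝ} (hl : l ≤ 𝓝 a) (h : ∀ᶠ x in l, HasDerivAt F (f x) x) :
      Tendsto (deriv F) l (𝓝 (f a)) :=
    (hf.tendsto.mono_left hl).congr' (h.mono fun x hx => hx.deriv.symm)
  have hleft := hasDerivWithinAt_Iic_of_tendsto_deriv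
    (fun x hx => HasDerivAt.differentiableAt hx |>.differentiableWithinAt)
    hFc.continuousWithinAt hF.1 (hlim nhdsWithin_le_nhds hF.1)
  have hright := hasDerivWithinAt_Ici_of_tendsto_deriv
    (fun x hx => HasDerivAt.differentiableAt hx |>.differentiableWithinAt)
    hFc.continuousWithinAt hF.2 (hlim nhdsWithin_le_nhds hF.2)
  simpa using hleft.union hright

namespace DerivBlowsUpRight

lemma congr (hf : DerivBlowsUpRight n f a) (h : f =ᶠ[𝓝 a] g) : DerivBlowsUpRight n g a := by
  have hev : ∀ᶠ x in 𝓝[>] a, f =ᶠ[𝓝 x] g :=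
    h.eventuallyEq_nhds.filter_mono nhdsWithin_le_nhds
  refine ⟨hf.contDiffAt.congr_of_eventuallyEq h.symm, ?_, hf.tendsto_atTop.congr' ?_⟩
  · filter_upwards [hev, hf.eventually_contDiffAt] with x hx hfx
      using hfx.congr_of_eventuallyEq hx.symm
  · exact hev.mono fun x hx => hx.iteratedDeriv_eq _

lemma add_left (hf : DerivBlowsUpRight n f a) (hg : ContDiffAt ℝ (n + 1 : ℕ) g a) :
    DerivBlowsUpRight n (g + f) a := by
  have hg_right : ∀ᶠ x in 𝓝[>] a, ContDiffAt ℝ (n + 1 : ℕ) g x :=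
    (hg.eventually (by simp)).filter_mono nhdsWithin_le_nhds
  refine ⟨(hg.of_le (mod_cast n.le_succ)).add hf.contDiffAt, ?_, ?_⟩
  · filter_upwards [hf.eventually_contDiffAt, hg_right] with x hfx hgx using hgx.add hfx
  · refine (((continuousAt_iteratedDeriv hg le_rfl).tendsto.mono_left nhdsWithin_le_nhds).add_atTop
      hf.tendsto_atTop).congr' ?_
    filter_upwards [hf.eventually_contDiffAt, hg_right] with x hfx hgx
      using (iteratedDeriv_add hgx hfx).symm

lemma mul_left (hf : DerivBlowsUpRight n f a) (hg : ContDiffAt ℝ (n + 1 : ℕ) g a)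
    (hga : 0 < g a) : DerivBlowsUpRight n (g * f) a := by
  have hg_right : ∀ᶠ x in 𝓝[>] a, ContDiffAt ℝ (n + 1 : ℕ) g x :=
    (hg.eventually (by simp)).filter_mono nhdsWithin_le_nhds
  refine ⟨(hg.of_le (mod_cast n.le_succ)).mul hf.contDiffAt, ?_, ?_⟩
  · filter_upwards [hf.eventually_contDiffAt, hg_right] with x hfx hgx using hgx.mul hfx
  · -- In the Leibniz formula only the term `g * f^(n+1)` is unbounded.
    have hlow : ContinuousAt (fun x => ∑ i ∈ Finset.range (n + 1),
        (n + 1).choose (i + 1) * iteratedDeriv (i + 1) g x * iteratedDeriv (n - i) f x) a := by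
      refine tendsto_finsetSum _ fun i hi => ?_
      have hi' : i ≤ n := Nat.lt_succ_iff.1 (Finset.mem_range.1 hi)
      exact (continuousAt_const.mul (continuousAt_iteratedDeriv hg (by omega))).mul
        (continuousAt_iteratedDeriv hf.contDiffAt (n.sub_le i))
    have htop := (hg.continuousAt.tendsto.mono_left nhdsWithin_le_nhds).pos_mul_atTop hga
      hf.tendsto_atTop
    refine ((hlow.tendsto.mono_left nhdsWithin_le_nhds).add_atTop htop).congr' ?_
    filter_upwards [hf.eventually_contDiffAt, hg_right] with x hfx hgx
    rw [iteratedDeriv_mul hgx hfx, Finset.sum_range_succ' _ (n + 1)]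
    simp

lemma of_hasDerivAt (hf : DerivBlowsUpRight n f a) (hF : ∀ᶠ x in 𝓝[≠] a, HasDerivAt F (f x) x)
    (hFc : ContinuousAt F a) : DerivBlowsUpRight (n + 1) F a := by
  have hFa : HasDerivAt F (f a) a :=
    hasDerivAt_of_eventually_hasDerivAt_ne hF hFc hf.contDiffAt.continuousAt
  have hF_nhds : ∀ᶠ x in 𝓝 a, HasDerivAt F (f x) x := by
    filter_upwards [eventually_nhdsWithin_iff.1 hF] with x hx
    rcases eq_or_ne x a with rfl | hne
    exacts [hFa, hx hne]
  have hF_right : ∀ᶠ x in 𝓝[>] a, ∀ᶠ y in 𝓝 x, HasDerivAt F (f y) y :=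
    hF_nhds.eventually_nhds.filter_mono nhdsWithin_le_nhds
  refine ⟨contDiffAt_succ_of_eventually_hasDerivAt hF_nhds hf.contDiffAt, ?_,
    hf.tendsto_atTop.congr' ?_⟩
  · filter_upwards [hF_right, hf.eventually_contDiffAt] with x hFx hfx
      using contDiffAt_succ_of_eventually_hasDerivAt hFx hfx
  · filter_upwards [hF_right] with x hFx
    rw [iteratedDeriv_succ' (n := n + 1)]
    exact (EventuallyEq.iteratedDeriv_eq _ (hFx.mono fun y hy => hy.deriv)).symm

lemma not_lipschitzOnWith (hf : DerivBlowsUpRight n f a) :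
    ¬ ∃ ε > (0 : ℝ), ∃ K : NNReal,
      LipschitzOnWith K (iteratedDeriv n f) (Set.Ioo (a - ε) (a + ε)) := by
  rintro ⟨ε, hε, K, hK⟩
  obtain ⟨x, hlarge, hx⟩ := ((hf.tendsto_atTop.eventually_gt_atTop (K : ℝ)).and
    (Ioo_mem_nhdsGT (lt_add_of_pos_right a hε))).exists
  have hle : ‖deriv (iteratedDeriv n f) x‖ ≤ K :=
    norm_deriv_le_of_lipschitzOn (Ioo_mem_nhds (by linarith [hx.1]) hx.2) hK
  rw [← iteratedDeriv_succ] at hle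
  exact hlarge.not_ge ((le_abs_self _).trans hle)

end DerivBlowsUpRight

lemma hasDerivAt_sub_pow_succ_mul_sqrt (n : ℕ) {x : ℝ} (hx : x ≠ a) :
    HasDerivAt (fun y => (y - a) ^ (n + 1) * √(y - a))
      ((n + 3 / 2) * ((x - a) ^ n * √(x - a))) x := by
  have hsub := (hasDerivAt_id' x).sub_const a
  refine ((hsub.fun_pow (n + 1)).mul (hsub.sqrt (sub_ne_zero.2 hx))).congr_deriv ?_
  calc _ = (n + 1) * ((x - a) ^ n * √(x - a)) + (x - a) ^ n * ((x - a) / √(x - a)) / 2 := by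
        push_cast [Nat.add_sub_cancel]
        ring
    _ = _ := by
        rw [div_sqrt]
        ring

lemma derivBlowsUpRight_sqrt_sub (a : ℝ) : DerivBlowsUpRight 0 (fun x => √(x - a)) a := by
  refine ⟨contDiffAt_zero.2 ⟨_, univ_mem, by fun_prop⟩, ?_, ?_⟩
  · filter_upwards [self_mem_nhdsWithin] with x hx
    exact (contDiffAt_id.sub contDiffAt_const).sqrt (sub_pos.2 hx).ne'
  · have hsqrt : Tendsto (fun x => 2 * √(x - a)) (𝓝[>] a) (𝓝[>] 0) := by
      refine tendsto_nhdsWithin_iff.2 ⟨?_, ?_⟩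
      · have hc : ContinuousAt (fun x => 2 * √(x - a)) a := by fun_prop
        simpa using hc.tendsto.mono_left nhdsWithin_le_nhds
      · filter_upwards [self_mem_nhdsWithin] with x hx
        exact mul_pos two_pos (sqrt_pos.2 (sub_pos.2 hx))
    refine (tendsto_inv_nhdsGT_zero.comp hsqrt).congr' ?_
    filter_upwards [self_mem_nhdsWithin] with x hx
    have hd := ((hasDerivAt_id' x).sub_const a).sqrt (sub_pos.2 hx).ne'
    rw [zero_add, iteratedDeriv_one, hd.deriv, one_div, Function.comp_apply]

lemma derivBlowsUpRight_sub_pow_mul_sqrt (n : ℕ) (a : ℝ) :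
    DerivBlowsUpRight n (fun x => (x - a) ^ n * √(x - a)) a := by
  induction n with
  | zero => simpa using derivBlowsUpRight_sqrt_sub a
  | succ n ih =>
    refine (ih.mul_left (g := fun _ => n + 3 / 2) contDiffAt_const (by positivity)).of_hasDerivAt
      ?_ (by fun_prop)
    exact eventually_mem_nhdsWithin.mono fun x hx => hasDerivAt_sub_pow_succ_mul_sqrt n hx

end General

/-! ### Elementary form of `chi` -/

section Trigonometry

variable {s : ℝ}

lemma arccos_eq_pi_sub_four_mul_arctan (h₀ : 0 ≤ s) (h₁ : s ≤ 1) :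
    arccos (8 * s ^ 2 / (1 + s ^ 2) ^ 2 - 1) = π - 4 * arctan s := by
  have hle : arctan s ≤ π / 4 := arctan_one ▸ arctan_mono h₁
  have hge : 0 ≤ arctan s := arctan_nonneg.2 h₀
  refine arccos_eq_of_eq_cos (by linarith) (by linarith) ?_
  have hs : 1 + s ^ 2 ≠ 0 := by positivity
  rw [cos_pi_sub, show 4 * arctan s = 2 * (2 * arctan s) by ring, cos_two_mul, cos_two_mul,
    cos_sq_arctan]
  field_simp
  ring

lemma arctan_eq_pi_div_two_sub_three_mul_arctan (h₀ : 0 < s) (h₁ : s < √3) :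
    arctan ((1 - 3 * s ^ 2) / (s * (3 - s ^ 2))) = π / 2 - 3 * arctan s := by
  have hlt : arctan s < π / 3 := arctan_sqrt_three ▸ arctan_strictMono h₁
  have hpos : 0 < arctan s := arctan_pos.2 h₀
  refine arctan_eq_of_tan_eq ?_ ⟨by linarith, by linarith⟩
  have hs : 1 + s ^ 2 ≠ 0 := by positivity
  have hs₃ : 3 - s ^ 2 ≠ 0 := by
    have := (lt_sqrt h₀.le).1 h₁
    linarith
  set c := cos (arctan s) with hc
  have hc₀ : c ≠ 0 := (cos_arctan_pos s).ne'
  have hc₂ : c ^ 2 = 1 / (1 + s ^ 2) := cos_sq_arctan s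
  have hsin : sin (arctan s) = s * c := by rw [← tan_mul_cos hc₀, tan_arctan]
  have hsin₃ : sin (3 * arctan s) = c * (s * (3 - s ^ 2)) / (1 + s ^ 2) := by
    rw [sin_three_mul, hsin,
      show 3 * (s * c) - 4 * (s * c) ^ 3 = s * c * (3 - 4 * (s ^ 2 * c ^ 2)) by ring, hc₂]
    field_simp
    ring
  have hcos₃ : cos (3 * arctan s) = c * (1 - 3 * s ^ 2) / (1 + s ^ 2) := by
    rw [cos_three_mul, ← hc, show 4 * c ^ 3 - 3 * c = c * (4 * c ^ 2 - 3) by ring, hc₂]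
    field_simp
    ring
  rw [tan_pi_div_two_sub, tan_eq_sin_div_cos, hsin₃, hcos₃]
  field_simp

end Trigonometry

section Correction

open Polynomial

@[fun_prop]
lemma contDiff_polynomial_eval (p : ℝ[X]) {n : WithTop ℕ∞} :
    ContDiff ℝ n fun x => p.eval x :=
  p.contDiff_aeval n

/-- Up to the factor `-2 * π / (3 * (1 - b) ^ 2)`, the coefficient of `arctan √(4 * b - 1)` in
`chiPlus`. -/
noncomputable def arctanPoly : ℝ[X] :=
  30 * X ^ 10 - 124 * X ^ 9 + 238 * X ^ 8 - 688 * X ^ 7 + 1276 * X ^ 6 - 1304 * X ^ 5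
    + 820 * X ^ 4 - 336 * X ^ 3 + 89 * X ^ 2 - 14 * X + 1

/-- Up to the factor `2 * π / (3 * (1 - b) ^ 2)`, the coefficient of `√(4 * b - 1)` in `chiPlus`. -/
noncomputable def sqrtPoly : ℝ[X] :=
  C (1 / 48) * (1 - X) * (1 - 2 * X) * (-180 * X ^ 7 + 444 * X ^ 6 - 554 * X ^ 5 + 754 * X ^ 4
    - 1214 * X ^ 3 + 922 * X ^ 2 - 305 * X + 37)

/-- The factor prime to `4 * X - 1` in the numerator of the derivative of
`sqrtPoly / arctanPoly * √(4 * b - 1) - arctan √(4 * b - 1)`. -/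
noncomputable def residualPoly : ℝ[X] :=
  (1 - X) * (1 - 2 * X) ^ 5 * (216 * X ^ 8 - 360 * X ^ 7 + 302 * X ^ 6 - 562 * X ^ 5 + 22 * X ^ 4
    + 84 * X ^ 3 + 9 * X ^ 2 - 23 * X + 6)

/-- The error in the approximation of `arctan √(4 * b - 1)` by a rational multiple of
`√(4 * b - 1)` that is hidden in `chiPlus`. It vanishes for `b ≤ 1 / 4`. -/
noncomputable def arctanDefect (b : ℝ) : ℝ :=
  sqrtPoly.eval b / arctanPoly.eval b * √(4 * b - 1) - arctan √(4 * b - 1)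

variable {b : ℝ}

lemma sqrt_four_mul_sub_one_eq_zero (hb : b ≤ 1 / 4) : √(4 * b - 1) = 0 :=
  sqrt_eq_zero_of_nonpos (by linarith)

lemma chiPlus_eq (h₁ : 1 / 4 < b) (h₂ : b < 1 / 2) :
    chiPlus b = chiMinus b + 2 * π / (3 * (1 - b) ^ 2) *
      (sqrtPoly.eval b * √(4 * b - 1) - arctanPoly.eval b * arctan √(4 * b - 1)) := by
  have hb₁ : 1 - b ≠ 0 := by linarith
  have hb₀ : b ≠ 0 := by linarith
  have hs_sq : √(4 * b - 1) ^ 2 = 4 * b - 1 := sq_sqrt (by linarith)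
  have hs_pos : 0 < √(4 * b - 1) := sqrt_pos.2 (by linarith)
  have hs_le : √(4 * b - 1) ≤ 1 := sqrt_le_one.2 (by linarith)
  have harccos : arccos (-1 + (4 * b - 1) / (2 * b ^ 2)) = π - 4 * arctan √(4 * b - 1) := by
    rw [← arccos_eq_pi_sub_four_mul_arctan hs_pos.le hs_le, hs_sq]
    congr 1
    field_simp
    ring
  have harctan : arctan ((1 - 3 * b) / ((1 - b) * √(4 * b - 1)))
      = π / 2 - 3 * arctan √(4 * b - 1) := by
    rw [← arctan_eq_pi_div_two_sub_three_mul_arctan hs_pos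
      (hs_le.trans_lt (lt_sqrt_of_sq_lt (by norm_num))), hs_sq]
    congr 1
    rw [div_eq_div_iff (by positivity) (mul_ne_zero hs_pos.ne' (by linarith))]
    ring
  simp only [chiPlus, chiMinus, sqrtPoly, arctanPoly, harccos, harctan, eval_add, eval_sub,
    eval_mul, eval_pow, eval_X, eval_ofNat, eval_neg, eval_one, eval_C]
  field_simp
  ring

lemma chi_eq (hb : b < 1 / 2) :
    chi b = chiMinus b + 2 * π / (3 * (1 - b) ^ 2) *
      (sqrtPoly.eval b * √(4 * b - 1) - arctanPoly.eval b * arctan √(4 * b - 1)) := by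
  rcases le_or_gt b (1 / 4) with h | h
  · rw [chi, if_pos h]
    simp [sqrt_four_mul_sub_one_eq_zero h]
  · rw [chi, if_neg h.not_ge, chiPlus_eq h hb]

lemma chi_eq_arctanDefect (hb : b < 1 / 2) (hp : arctanPoly.eval b ≠ 0) :
    chi b = chiMinus b
      + 2 * π * arctanPoly.eval b / (3 * (1 - b) ^ 2) * arctanDefect b := by
  rw [chi_eq hb, arctanDefect]
  field_simp

lemma arctanPoly_eval_pos : 0 < arctanPoly.eval (1 / 4) := by
  norm_num [arctanPoly]

/-- This is where the cancellation at `b = 1 / 4` happens: the left-hand side is `2 * X` times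
`arctanPoly ^ 2 * √(4 * b - 1)` times the derivative of `arctanDefect`. -/
lemma arctanPoly_sqrtPoly_wronskian :
    2 * X * (4 * X - 1) * (derivative sqrtPoly * arctanPoly - sqrtPoly * derivative arctanPoly)
        + 4 * X * sqrtPoly * arctanPoly - arctanPoly ^ 2
      = C (1 / 6) * (4 * X - 1) ^ 3 * residualPoly := by
  refine Polynomial.funext fun x => ?_
  simp [sqrtPoly, arctanPoly, residualPoly, derivative_pow]
  ring

lemma hasDerivAt_arctanDefect (hb₀ : b ≠ 0) (hb : b ≠ 1 / 4) (hp : arctanPoly.eval b ≠ 0) :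
    HasDerivAt arctanDefect (residualPoly.eval b / (12 * b * arctanPoly.eval b ^ 2)
      * ((4 * b - 1) ^ 2 * √(4 * b - 1))) b := by
  have hlin : HasDerivAt (fun x : ℝ => 4 * x - 1) 4 b := by
    simpa using ((hasDerivAt_id b).const_mul 4).sub_const 1
  have hsqrt := hlin.sqrt fun h => hb (by linarith)
  refine ((((sqrtPoly.hasDerivAt b).fun_div (arctanPoly.hasDerivAt b) hp).mul hsqrt).sub
    hsqrt.arctan).congr_deriv ?_
  rcases hb.lt_or_gt with h | h
  · simp [sqrt_four_mul_sub_one_eq_zero h.le]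
  have hpos : 0 < 4 * b - 1 := by linarith
  have hs : √(4 * b - 1) ≠ 0 := (sqrt_pos.2 hpos).ne'
  have hs_sq : √(4 * b - 1) ^ 2 = 4 * b - 1 := sq_sqrt hpos.le
  have hw := congrArg (eval b) arctanPoly_sqrtPoly_wronskian
  simp only [eval_add, eval_sub, eval_mul, eval_pow, eval_X, eval_ofNat, eval_one, eval_C] at hw
  rw [hs_sq, show 1 + (4 * b - 1) = 4 * b by ring]
  field_simp
  rw [hs_sq]
  linear_combination 12 * hw

lemma derivBlowsUpRight_arctanDefect : DerivBlowsUpRight 3 arctanDefect (1 / 4) := by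
  have hp : arctanPoly.eval (1 / 4) ≠ 0 := arctanPoly_eval_pos.ne'
  let w : ℝ → ℝ := fun b => 32 * residualPoly.eval b / (12 * b * arctanPoly.eval b ^ 2)
  have hw : ContDiffAt ℝ (2 + 1 : ℕ) w (1 / 4) := by
    have hden : 12 * (1 / 4) * arctanPoly.eval (1 / 4) ^ 2 ≠ 0 := by positivity
    fun_prop (disch := assumption)
  have hw_pos : 0 < w (1 / 4) := by
    norm_num [w, residualPoly, arctanPoly]
  refine ((derivBlowsUpRight_sub_pow_mul_sqrt 2 (1 / 4)).mul_left hw hw_pos).of_hasDerivAt ?_ ?_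
  · have hp_near : ∀ᶠ b in 𝓝[≠] (1 / 4 : ℝ), arctanPoly.eval b ≠ 0 :=
      (arctanPoly.continuous.continuousAt.eventually_ne hp).filter_mono nhdsWithin_le_nhds
    have hb_near : ∀ᶠ b in 𝓝[≠] (1 / 4 : ℝ), b ≠ 0 :=
      (eventually_ne_nhds (by norm_num)).filter_mono nhdsWithin_le_nhds
    filter_upwards [hp_near, hb_near, self_mem_nhdsWithin] with b hpb hb₀ hb
    refine (hasDerivAt_arctanDefect hb₀ hb hpb).congr_deriv ?_
    have hsqrt : √(4 * b - 1) = 2 * √(b - 1 / 4) := by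
      rw [show 4 * b - 1 = 2 ^ 2 * (b - 1 / 4) by ring, sqrt_mul (by positivity),
        sqrt_sq zero_le_two]
    rw [hsqrt, Pi.mul_apply]
    ring
  · unfold arctanDefect
    fun_prop (disch := assumption)

lemma contDiff_chiMinus {n : WithTop ℕ∞} : ContDiff ℝ n chiMinus := by
  unfold chiMinus
  fun_prop

lemma derivBlowsUpRight_chi : DerivBlowsUpRight 3 chi (1 / 4) := by
  have hp : 0 < arctanPoly.eval (1 / 4) := arctanPoly_eval_pos
  let A : ℝ → ℝ := fun b => 2 * π * arctanPoly.eval b / (3 * (1 - b) ^ 2)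
  have hA : ContDiffAt ℝ (3 + 1 : ℕ) A (1 / 4) := by
    fun_prop (disch := norm_num)
  have hA_pos : 0 < A (1 / 4) := by
    dsimp only [A]
    positivity
  refine ((derivBlowsUpRight_arctanDefect.mul_left hA hA_pos).add_left
    contDiff_chiMinus.contDiffAt).congr ?_
  filter_upwards [Iio_mem_nhds (show (1 / 4 : ℝ) < 1 / 2 by norm_num),
    arctanPoly.continuous.continuousAt.eventually_ne hp.ne'] with b hb hpb
    using (chi_eq_arctanDefect hb hpb).symm

lemma contDiffAt_chi_of_ne {n : ℕ∞} (hb : b < 1 / 2) (hb' : b ≠ 1 / 4) :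
    ContDiffAt ℝ n chi b := by
  have hne : 4 * b - 1 ≠ 0 := fun h => hb' (by linarith)
  have hden : 3 * (1 - b) ^ 2 ≠ 0 := by
    have : 1 - b ≠ 0 := by linarith
    positivity
  have hform : ContDiffAt ℝ n (fun x => chiMinus x + 2 * π / (3 * (1 - x) ^ 2) *
      (sqrtPoly.eval x * √(4 * x - 1) - arctanPoly.eval x * arctan √(4 * x - 1))) b := by
    have hminus : ContDiffAt ℝ n chiMinus b := contDiff_chiMinus.contDiffAt
    have harctan : ContDiffAt ℝ n (fun x => arctan √(4 * x - 1)) b :=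
      ContDiffAt.arctan (by fun_prop (disch := assumption))
    fun_prop (disch := assumption)
  refine hform.congr_of_eventuallyEq ?_
  filter_upwards [Iio_mem_nhds hb] with x hx using chi_eq hx

lemma contDiffOn_chi : ContDiffOn ℝ 3 chi (Set.Iio (1 / 2)) := by
  intro b hb
  rcases eq_or_ne b (1 / 4) with rfl | hne
  · exact derivBlowsUpRight_chi.contDiffAt.contDiffWithinAt
  · exact (contDiffAt_chi_of_ne hb hne).contDiffWithinAt

end Correction

theorem chi_C3_not_C31 :
    ContDiffOn ℝ 3 chi (Set.Ioo 0 (1/2)) ∧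
    (¬ ∃ ε > (0:ℝ), ∃ K : NNReal,
        LipschitzOnWith K (iteratedDeriv 3 chi) (Set.Ioo (1/4 - ε) (1/4 + ε))) ∧
    Tendsto (iteratedDeriv 4 chiPlus) (nhdsWithin (1/4) (Set.Ioi (1/4))) atTop := by
  refine ⟨contDiffOn_chi.mono Set.Ioo_subset_Iio_self, derivBlowsUpRight_chi.not_lipschitzOnWith,
    derivBlowsUpRight_chi.tendsto_atTop.congr' ?_⟩
  filter_upwards [self_mem_nhdsWithin] with b hb
  refine EventuallyEq.iteratedDeriv_eq 4 ?_
  filter_upwards [Ioi_mem_nhds hb] with x hx using if_neg (not_le.2 hx)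
end

section
/- For 1/4 < b < 1/2, with r₀ = (1 − 2b − b^{3/2})/(√b(1−b)), one has ∫_{r₀}^1 r·arctan( √(4b⁴r² − (1 − 3b + b² − b(1−b)r²)²) / (1 − b − b² − b(1−b)r²) ) dr = π(1−2b)(b+1)/(8(1−b)²) + ((1−2b)/(4b(1−b)))√(4b−1) − ((b+2)(1−2b)/(4b(1−b)))·arctan(√(4b−1)) − ((1+b)(1−2b)/(4(1−b)²))·arctan((1−3b)/((1−b)√(4b−1))). -/
open Real intervalIntegral

/-!
With `u = r ^ 2` the integral becomes half of `∫ arctan (√P / Q)`, where `Q` is affine, `P` is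
quadratic and, decisively, `L = P + Q ^ 2` is affine again. So `θ = arctan (√P / Q)` is an angle of
a right triangle with legs `Q`, `√P` and squared hypotenuse `L`. Integrating by parts against
`L / L'`, the factor `L` cancels the denominator of
`θ' = (L' * Q - 2 * Q' * L) / (2 * √P * L)`, and an affine function over `√P` is left, whose
antiderivative is a combination of `√P` and `arcsin (P' / √D)`, with `D` the discriminant of `P`.
At the lower limit `P` vanishes, so that only `arcsin 1` survives; at the upper limit the two
arctangents that occur are related by the triple-angle formula.
-/

lemma integral_mul_comp_sq {a b : ℝ} (ha : 0 ≤ a) (hb : 0 ≤ b) (g : ℝ → ℝ) :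
    ∫ r in a..b, r * g (r ^ 2) = (∫ u in a ^ 2..b ^ 2, g u) / 2 := by
  have hsub : ∫ r in a..b, (g ∘ (· ^ 2)) r * (2 * r) = ∫ u in a ^ 2..b ^ 2, g u := by
    refine integral_comp_mul_deriv_of_deriv_nonneg (by fun_prop)
      (fun r _ => by simpa using hasDerivAt_pow 2 r) fun r hr => ?_
    have : 0 < r := (le_min ha hb).trans_lt hr.1
    positivity
  rw [← hsub, ← integral_div]
  congr 1 with r
  simp only [Function.comp_apply]
  ring

lemma arctan_div_eq_pi_div_two_sub_three_mul_arctan {t : ℝ} (ht₀ : 0 < t) (ht₁ : t < √3) :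
    arctan ((1 - 3 * t ^ 2) / (3 * t - t ^ 3)) = π / 2 - 3 * arctan t := by
  have hφ₀ : 0 < arctan t := arctan_pos.2 ht₀
  have hφ₁ : arctan t < π / 3 := arctan_sqrt_three ▸ arctan_strictMono ht₁
  have hcos : 0 < cos (arctan t) := cos_arctan_pos t
  have hsin : sin (arctan t) = t * cos (arctan t) := by
    rw [← tan_mul_cos hcos.ne', tan_arctan]
  have hsq : cos (arctan t) ^ 2 * (1 + t ^ 2) = 1 := by
    rw [cos_sq_arctan]; field_simp
  have hsin₃ : sin (3 * arctan t) = cos (arctan t) ^ 3 * (3 * t - t ^ 3) := by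
    rw [sin_three_mul, hsin]
    linear_combination (-3 * t * cos (arctan t)) * hsq
  have hcos₃ : cos (3 * arctan t) = cos (arctan t) ^ 3 * (1 - 3 * t ^ 2) := by
    rw [cos_three_mul]
    linear_combination (3 * cos (arctan t)) * hsq
  refine arctan_eq_of_tan_eq ?_ ⟨by linarith, by linarith⟩
  rw [tan_pi_div_two_sub, tan_eq_sin_div_cos, inv_div, hsin₃, hcos₃,
    mul_div_mul_left _ _ (pow_pos hcos 3).ne']

/-- A family of right triangles over a real parameter `u`, in which the leg `q₀ + q₁ * u` and the
square `l₀ + l₁ * u` of the hypotenuse are both affine in `u`. -/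
structure RightTriangleFamily where
  l₀ : ℝ
  l₁ : ℝ
  q₀ : ℝ
  q₁ : ℝ

namespace RightTriangleFamily

variable (T : RightTriangleFamily) {u v : ℝ}

/-- The squared hypotenuse. -/
def hypSq (u : ℝ) : ℝ := T.l₀ + T.l₁ * u

/-- The leg adjacent to `T.angle u`, negative values being allowed. -/
def adj (u : ℝ) : ℝ := T.q₀ + T.q₁ * u

/-- The square of the leg opposite to `T.angle u`; the triangle exists where this is positive. -/
def oppSq (u : ℝ) : ℝ := T.hypSq u - T.adj u ^ 2

/-- The angle between the hypotenuse and the leg `T.adj u`. -/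
noncomputable def angle (u : ℝ) : ℝ := arctan (√(T.oppSq u) / T.adj u)

/-- The derivative of the quadratic polynomial `T.oppSq`. -/
def oppSqDeriv (u : ℝ) : ℝ := T.l₁ - 2 * T.q₁ * T.adj u

/-- The discriminant of the quadratic polynomial `T.oppSq`. -/
def discr : ℝ := T.l₁ ^ 2 - 4 * T.l₁ * T.q₀ * T.q₁ + 4 * T.q₁ ^ 2 * T.l₀

/-- An antiderivative of `T.angle` when neither of the two affine functions is constant. -/
noncomputable def primitive (u : ℝ) : ℝ :=
  T.hypSq u / T.l₁ * T.angle u - √(T.oppSq u) / (2 * T.q₁)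
    - T.discr / (4 * T.l₁ * T.q₁ * |T.q₁|) * arcsin (T.oppSqDeriv u / √T.discr)

lemma oppSqDeriv_sq_add (u : ℝ) :
    T.oppSqDeriv u ^ 2 + 4 * T.q₁ ^ 2 * T.oppSq u = T.discr := by
  simp only [oppSqDeriv, oppSq, hypSq, adj, discr]; ring

lemma hasDerivAt_hypSq (u : ℝ) : HasDerivAt T.hypSq T.l₁ u :=
  (((hasDerivAt_id u).const_mul T.l₁).const_add T.l₀).congr_deriv (mul_one _)

lemma hasDerivAt_adj (u : ℝ) : HasDerivAt T.adj T.q₁ u :=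
  (((hasDerivAt_id u).const_mul T.q₁).const_add T.q₀).congr_deriv (mul_one _)

lemma hasDerivAt_oppSq (u : ℝ) : HasDerivAt T.oppSq (T.oppSqDeriv u) u := by
  refine ((T.hasDerivAt_hypSq u).sub ((T.hasDerivAt_adj u).pow 2)).congr_deriv ?_
  simp only [oppSqDeriv]
  ring

lemma hasDerivAt_oppSqDeriv (u : ℝ) : HasDerivAt T.oppSqDeriv (-(2 * T.q₁ ^ 2)) u := by
  refine (((T.hasDerivAt_adj u).const_mul (2 * T.q₁)).const_sub T.l₁).congr_deriv ?_
  ring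

lemma continuous_oppSq : Continuous T.oppSq :=
  continuous_iff_continuousAt.2 fun u => (T.hasDerivAt_oppSq u).continuousAt

lemma continuousOn_angle {s : Set ℝ} (hs : ∀ u ∈ s, T.adj u ≠ 0) : ContinuousOn T.angle s :=
  continuous_arctan.comp_continuousOn <| T.continuous_oppSq.sqrt.continuousOn.div
    (fun u _ => (T.hasDerivAt_adj u).continuousAt.continuousWithinAt) hs

lemma continuousOn_primitive {s : Set ℝ} (hs : ∀ u ∈ s, T.adj u ≠ 0) :
    ContinuousOn T.primitive s := by
  have hhyp : Continuous fun u => T.hypSq u / T.l₁ := by unfold hypSq; fun_prop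
  have harcsin : Continuous fun u => arcsin (T.oppSqDeriv u / √T.discr) := by
    unfold oppSqDeriv adj; fun_prop
  exact ((hhyp.continuousOn.mul (T.continuousOn_angle hs)).sub
    (T.continuous_oppSq.sqrt.div_const _).continuousOn).sub (harcsin.const_mul _).continuousOn

lemma hasDerivAt_angle (hP : 0 < T.oppSq u) (hQ : T.adj u ≠ 0) :
    HasDerivAt T.angle
      ((T.l₁ * T.adj u - 2 * T.q₁ * T.hypSq u) / (2 * √(T.oppSq u) * T.hypSq u)) u := by
  have : 0 < √(T.oppSq u) := sqrt_pos.2 hP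
  have hL : T.hypSq u = √(T.oppSq u) ^ 2 + T.adj u ^ 2 := by
    rw [sq_sqrt hP.le, oppSq, sub_add_cancel]
  refine (((T.hasDerivAt_oppSq u).sqrt hP.ne').div (T.hasDerivAt_adj u) hQ).arctan.congr_deriv ?_
  simp only [Pi.div_apply]
  rw [hL, oppSqDeriv]
  field_simp
  ring

lemma discr_pos (hq : T.q₁ ≠ 0) (hP : 0 < T.oppSq u) : 0 < T.discr := by
  rw [← T.oppSqDeriv_sq_add u]; positivity

lemma one_sub_oppSqDeriv_div_sq (hq : T.q₁ ≠ 0) (hP : 0 < T.oppSq u) :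
    1 - (T.oppSqDeriv u / √T.discr) ^ 2 = (2 * |T.q₁|) ^ 2 * T.oppSq u / T.discr := by
  have hD := T.discr_pos hq hP
  rw [div_pow, sq_sqrt hD.le, mul_pow, sq_abs, one_sub_div hD.ne', ← T.oppSqDeriv_sq_add u]
  ring

lemma sqrt_one_sub_oppSqDeriv_div_sq (hq : T.q₁ ≠ 0) (hP : 0 < T.oppSq u) :
    √(1 - (T.oppSqDeriv u / √T.discr) ^ 2) = 2 * |T.q₁| * √(T.oppSq u) / √T.discr := by
  rw [T.one_sub_oppSqDeriv_div_sq hq hP, sqrt_div (by positivity), sqrt_mul (by positivity),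
    sqrt_sq (by positivity)]

lemma oppSqDeriv_div_mem_Ioo (hq : T.q₁ ≠ 0) (hP : 0 < T.oppSq u) :
    T.oppSqDeriv u / √T.discr ∈ Set.Ioo (-1) 1 := by
  have hD := T.discr_pos hq hP
  have hpos : 0 < 1 - (T.oppSqDeriv u / √T.discr) ^ 2 := by
    rw [T.one_sub_oppSqDeriv_div_sq hq hP]; positivity
  exact abs_lt.1 ((sq_lt_one_iff_abs_lt_one _).1 (sub_pos.1 hpos))

lemma hasDerivAt_arcsin_oppSqDeriv_div (hq : T.q₁ ≠ 0) (hP : 0 < T.oppSq u) :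
    HasDerivAt (fun u => arcsin (T.oppSqDeriv u / √T.discr)) (-(|T.q₁| / √(T.oppSq u))) u := by
  have hmem := T.oppSqDeriv_div_mem_Ioo hq hP
  have hD : 0 < √T.discr := sqrt_pos.2 (T.discr_pos hq hP)
  have : 0 < √(T.oppSq u) := sqrt_pos.2 hP
  refine ((hasDerivAt_arcsin hmem.1.ne' hmem.2.ne).comp u
    ((T.hasDerivAt_oppSqDeriv u).div_const √T.discr)).congr_deriv ?_
  rw [T.sqrt_one_sub_oppSqDeriv_div_sq hq hP, ← sq_abs]
  field_simp

lemma hasDerivAt_primitive (hl : T.l₁ ≠ 0) (hq : T.q₁ ≠ 0) (hP : 0 < T.oppSq u)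
    (hQ : T.adj u ≠ 0) : HasDerivAt T.primitive (T.angle u) u := by
  have : 0 < √(T.oppSq u) := sqrt_pos.2 hP
  have hL : 0 < T.hypSq u := by
    rw [← sub_add_cancel (T.hypSq u) (T.adj u ^ 2), ← oppSq]
    positivity
  have hcancel : 2 * T.q₁ * (T.l₁ * T.adj u - 2 * T.q₁ * T.hypSq u)
      = T.l₁ * T.oppSqDeriv u - T.discr := by
    simp only [adj, hypSq, oppSqDeriv, discr]; ring
  refine (((((T.hasDerivAt_hypSq u).div_const T.l₁).mul (T.hasDerivAt_angle hP hQ)).sub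
    (((T.hasDerivAt_oppSq u).sqrt hP.ne').div_const (2 * T.q₁))).sub
    ((T.hasDerivAt_arcsin_oppSqDeriv_div hq hP).const_mul _)).congr_deriv ?_
  field_simp
  linear_combination 4 * hcancel

lemma oppSq_pos_of_mem_Ioo (hq : T.q₁ ≠ 0) (hu : 0 ≤ T.oppSq u) (hv : 0 ≤ T.oppSq v) {x : ℝ}
    (hx : x ∈ Set.Ioo u v) : 0 < T.oppSq x := by
  have hux : 0 < x - u := sub_pos.2 hx.1
  have hxv : 0 < v - x := sub_pos.2 hx.2
  have huv : 0 < v - u := by linarith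
  have hconcave : (v - u) * T.oppSq x = (v - x) * T.oppSq u + (x - u) * T.oppSq v
      + T.q₁ ^ 2 * ((x - u) * (v - x) * (v - u)) := by
    simp only [oppSq, hypSq, adj]; ring
  refine pos_of_mul_pos_right (a := v - u) ?_ huv.le
  rw [hconcave]
  positivity

theorem integral_angle (hl : T.l₁ ≠ 0) (hq : T.q₁ ≠ 0) (huv : u ≤ v) (hu : 0 ≤ T.oppSq u)
    (hv : 0 ≤ T.oppSq v) (hQ : ∀ x ∈ Set.Icc u v, T.adj x ≠ 0) :
    ∫ x in u..v, T.angle x = T.primitive v - T.primitive u :=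
  integral_eq_sub_of_hasDerivAt_of_le huv (T.continuousOn_primitive hQ)
    (fun x hx => T.hasDerivAt_primitive hl hq (T.oppSq_pos_of_mem_Ioo hq hu hv hx)
      (hQ x (Set.Ioo_subset_Icc_self hx)))
    (T.continuousOn_angle (Set.uIcc_of_le huv ▸ hQ)).intervalIntegrable

lemma arcsin_oppSqDeriv_div_of_pos (hq : T.q₁ ≠ 0) (hP : 0 < T.oppSq u) :
    arcsin (T.oppSqDeriv u / √T.discr) =
      arctan (T.oppSqDeriv u / (2 * |T.q₁| * √(T.oppSq u))) := by
  have hD : 0 < √T.discr := sqrt_pos.2 (T.discr_pos hq hP)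
  rw [arcsin_eq_arctan (T.oppSqDeriv_div_mem_Ioo hq hP), T.sqrt_one_sub_oppSqDeriv_div_sq hq hP,
    div_div_div_cancel_right₀ hD.ne']

lemma primitive_of_oppSq_eq_zero (hP : T.oppSq u = 0) (hP' : 0 < T.oppSqDeriv u) :
    T.primitive u = -(T.discr / (4 * T.l₁ * T.q₁ * |T.q₁|) * (π / 2)) := by
  have hD : √T.discr = T.oppSqDeriv u := by
    rw [← T.oppSqDeriv_sq_add u, hP, mul_zero, add_zero, sqrt_sq hP'.le]
  simp only [primitive, angle, hP, hD, div_self hP'.ne', sqrt_zero, zero_div, arctan_zero,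
    arcsin_one, mul_zero, sub_zero, zero_sub]

end RightTriangleFamily

/-- The triangles whose angle at `u = r ^ 2` is the arctangent in the integrand. The affine
functions are read off from the denominator `Q` and from
`P + Q ^ 2 = 4 * b * (1 - 2 * b) * (1 - b - b * u)`, where `P` is the radicand. -/
def integrandTriangle (b : ℝ) : RightTriangleFamily where
  l₀ := 4 * b * (1 - 2 * b) * (1 - b)
  l₁ := -(4 * b ^ 2 * (1 - 2 * b))
  q₀ := 1 - b - b ^ 2
  q₁ := -(b * (1 - b))

/-- The lower limit `r₀` of the integral. -/
noncomputable def lowerLimit (b : ℝ) : ℝ := (1 - 2 * b - b ^ ((3 : ℝ) / 2)) / (√b * (1 - b))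

section

open RightTriangleFamily

variable {b : ℝ}

lemma angle_integrandTriangle (b u : ℝ) :
    (integrandTriangle b).angle u =
      arctan (√(4 * b ^ 4 * u - (1 - 3 * b + b ^ 2 - b * (1 - b) * u) ^ 2)
        / (1 - b - b ^ 2 - b * (1 - b) * u)) := by
  simp only [angle, oppSq, hypSq, adj, integrandTriangle]
  ring_nf

lemma discr_integrandTriangle (b : ℝ) :
    (integrandTriangle b).discr = 16 * b ^ 5 * (1 - 2 * b) ^ 2 := by
  simp only [discr, integrandTriangle]; ring

lemma abs_q₁_integrandTriangle (hb₀ : 0 < b) (hb₁ : b < 1) :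
    |(integrandTriangle b).q₁| = b * (1 - b) := by
  rw [integrandTriangle, abs_neg, abs_of_pos (mul_pos hb₀ (sub_pos.2 hb₁))]

lemma q₁_integrandTriangle_ne_zero (hb₀ : 0 < b) (hb₁ : b < 1) : (integrandTriangle b).q₁ ≠ 0 :=
  neg_ne_zero.2 (mul_pos hb₀ (sub_pos.2 hb₁)).ne'

lemma adj_integrandTriangle_one (b : ℝ) : (integrandTriangle b).adj 1 = 1 - 2 * b := by
  simp only [adj, integrandTriangle]; ring

lemma adj_integrandTriangle_pos (hb₀ : 0 < b) (hb₁ : b < 1 / 2) {u : ℝ} (hu : u ≤ 1) :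
    0 < (integrandTriangle b).adj u := by
  have hdiff : (integrandTriangle b).adj u = (1 - 2 * b) + b * (1 - b) * (1 - u) := by
    simp only [adj, integrandTriangle]; ring
  have h₁ : 0 < 1 - 2 * b := by linarith
  have h₂ : 0 < 1 - b := by linarith
  have : 0 ≤ 1 - u := sub_nonneg.2 hu
  rw [hdiff]
  positivity

lemma oppSq_integrandTriangle_one (b : ℝ) :
    (integrandTriangle b).oppSq 1 = (1 - 2 * b) ^ 2 * (4 * b - 1) := by
  simp only [oppSq, hypSq, adj, integrandTriangle]; ring

lemma oppSqDeriv_integrandTriangle_one (b : ℝ) :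
    (integrandTriangle b).oppSqDeriv 1 = 2 * b * (1 - 2 * b) * (1 - 3 * b) := by
  simp only [oppSqDeriv, adj, integrandTriangle]; ring

lemma sqrt_oppSq_integrandTriangle_one (hb : b < 1 / 2) :
    √((integrandTriangle b).oppSq 1) = (1 - 2 * b) * √(4 * b - 1) := by
  rw [oppSq_integrandTriangle_one, sqrt_mul (sq_nonneg _), sqrt_sq (by linarith)]

lemma angle_integrandTriangle_one (hb : b < 1 / 2) :
    (integrandTriangle b).angle 1 = arctan √(4 * b - 1) := by
  have h : 1 - 2 * b ≠ 0 := by linarith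
  rw [angle, sqrt_oppSq_integrandTriangle_one hb, adj_integrandTriangle_one,
    mul_div_cancel_left₀ _ h]

lemma arcsin_integrandTriangle_one (hb₀ : 1 / 4 < b) (hb₁ : b < 1 / 2) :
    arcsin ((integrandTriangle b).oppSqDeriv 1 / √(integrandTriangle b).discr) =
      arctan ((1 - 3 * b) / ((1 - b) * √(4 * b - 1))) := by
  have hb : 0 < b := by linarith
  have h₂ : 0 < 1 - 2 * b := by linarith
  have ht : 0 < 4 * b - 1 := by linarith
  have hP : 0 < (integrandTriangle b).oppSq 1 := by
    rw [oppSq_integrandTriangle_one]; positivity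
  rw [arcsin_oppSqDeriv_div_of_pos _ (q₁_integrandTriangle_ne_zero hb (by linarith)) hP,
    oppSqDeriv_integrandTriangle_one, sqrt_oppSq_integrandTriangle_one hb₁,
    abs_q₁_integrandTriangle hb (by linarith)]
  have hcommon : 2 * (b * (1 - b)) * ((1 - 2 * b) * √(4 * b - 1)) =
      2 * b * (1 - 2 * b) * ((1 - b) * √(4 * b - 1)) := by ring
  rw [hcommon, mul_div_mul_left _ _ (by positivity)]

lemma primitive_integrandTriangle_one (hb₀ : 1 / 4 < b) (hb₁ : b < 1 / 2) :
    (integrandTriangle b).primitive 1 =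
      -((1 - 2 * b) / b) * arctan √(4 * b - 1)
        + (1 - 2 * b) / (2 * b * (1 - b)) * √(4 * b - 1)
        - b * (1 - 2 * b) / (1 - b) ^ 2 * arctan ((1 - 3 * b) / ((1 - b) * √(4 * b - 1))) := by
  have hb : 0 < b := by linarith
  have h₁ : 0 < 1 - b := by linarith
  have h₂ : 1 - b * 2 ≠ 0 := by linarith
  rw [primitive, angle_integrandTriangle_one hb₁, arcsin_integrandTriangle_one hb₀ hb₁,
    sqrt_oppSq_integrandTriangle_one hb₁, discr_integrandTriangle,
    abs_q₁_integrandTriangle hb (by linarith)]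
  simp only [hypSq, integrandTriangle]
  field_simp
  ring

lemma sqrt_mul_lowerLimit (hb₀ : 0 < b) (hb₁ : b < 1) :
    √b * (1 - b) * lowerLimit b = 1 - 2 * b - b * √b := by
  have hpow : b ^ ((3 : ℝ) / 2) = b * √b := by
    rw [sqrt_eq_rpow, show (3 : ℝ) / 2 = 1 + 1 / 2 by norm_num, rpow_add hb₀, rpow_one]
  rw [lowerLimit, hpow, mul_div_cancel₀ _ (mul_pos (sqrt_pos.2 hb₀) (sub_pos.2 hb₁)).ne']

lemma lowerLimit_pos (hb₀ : 0 < b) (hb₁ : b < (3 - √5) / 2) : 0 < lowerLimit b := by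
  have h₅ : 2 < √5 := lt_sqrt_of_sq_lt (by norm_num)
  have h₁ : 0 < 1 - b := by linarith
  have hquad : 0 < 1 - 3 * b + b ^ 2 := by
    have hroots : 1 - 3 * b + b ^ 2 = ((3 - √5) / 2 - b) * ((3 + √5) / 2 - b) := by
      linear_combination (1 / 4) * sq_sqrt (show (0 : ℝ) ≤ 5 by norm_num)
    rw [hroots]
    exact mul_pos (sub_pos.2 hb₁) (by linarith)
  have hlt : b * √b < 1 - 2 * b := by
    have hfactor : (1 - 2 * b) ^ 2 - b ^ 2 * b = (1 - b) * (1 - 3 * b + b ^ 2) := by ring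
    refine lt_of_pow_lt_pow_left₀ 2 (by linarith) ?_
    rw [mul_pow, sq_sqrt hb₀.le, ← sub_pos, hfactor]
    exact mul_pos h₁ hquad
  refine pos_of_mul_pos_right (a := √b * (1 - b)) ?_ (by positivity)
  rw [sqrt_mul_lowerLimit hb₀ (by linarith)]
  exact sub_pos.2 hlt

lemma lowerLimit_sq_lt_one (hb₀ : 1 / 4 < b) (hb₁ : b < 1 / 2) : lowerLimit b ^ 2 < 1 := by
  have hs : 1 / 2 < √b := lt_sqrt_of_sq_lt (by linarith)
  have hk : 0 < √b * (1 - b) := mul_pos (by linarith) (by linarith)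
  have hmul := sqrt_mul_lowerLimit (b := b) (by linarith) (by linarith)
  have hss : √b ^ 2 = b := sq_sqrt (by linarith)
  have hadd : √b * (1 - b) * (1 + lowerLimit b) = (1 - 2 * b) * (1 + √b) := by
    linear_combination hmul
  have hsub : √b * (1 - b) * (1 - lowerLimit b) = (2 * √b - 1) * (√b + 1) := by
    linear_combination -hmul - 2 * hss
  have hneg : 0 < 1 + lowerLimit b :=
    pos_of_mul_pos_right (hadd ▸ mul_pos (by linarith) (by linarith)) hk.le
  have hpos : 0 < 1 - lowerLimit b :=
    pos_of_mul_pos_right (hsub ▸ mul_pos (by linarith) (by linarith)) hk.le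
  exact (sq_lt_one_iff_abs_lt_one _).2 (abs_lt.2 ⟨by linarith, by linarith⟩)

lemma oppSqDeriv_integrandTriangle_lowerLimit_sq (hb₀ : 0 < b) (hb₁ : b < 1) :
    (integrandTriangle b).oppSqDeriv (lowerLimit b ^ 2) = 4 * b ^ 2 * √b * (1 - 2 * b) := by
  have hss : √b ^ 2 = b := sq_sqrt hb₀.le
  have hsq : b * (1 - b) ^ 2 * lowerLimit b ^ 2 = (1 - 2 * b - b * √b) ^ 2 := by
    rw [← sqrt_mul_lowerLimit hb₀ hb₁, mul_pow, mul_pow, hss]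
  simp only [oppSqDeriv, adj, integrandTriangle]
  linear_combination -2 * b * hsq - 2 * b ^ 3 * hss

lemma oppSq_integrandTriangle_lowerLimit_sq (hb₀ : 0 < b) (hb₁ : b < 1) :
    (integrandTriangle b).oppSq (lowerLimit b ^ 2) = 0 := by
  have hss : √b ^ 2 = b := sq_sqrt hb₀.le
  have h := (integrandTriangle b).oppSqDeriv_sq_add (lowerLimit b ^ 2)
  rw [oppSqDeriv_integrandTriangle_lowerLimit_sq hb₀ hb₁, discr_integrandTriangle] at h
  have hq := q₁_integrandTriangle_ne_zero hb₀ hb₁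
  refine (mul_eq_zero.1 ?_).resolve_left (mul_ne_zero four_ne_zero (pow_ne_zero 2 hq))
  linear_combination h - 16 * b ^ 4 * (1 - 2 * b) ^ 2 * hss

lemma primitive_integrandTriangle_lowerLimit_sq (hb₀ : 0 < b) (hb₁ : b < 1 / 2) :
    (integrandTriangle b).primitive (lowerLimit b ^ 2) =
      -(b * (1 - 2 * b) / (1 - b) ^ 2 * (π / 2)) := by
  have h₁ : 0 < 1 - b := by linarith
  have h₂ : 0 < 1 - 2 * b := by linarith
  have hP' : 0 < (integrandTriangle b).oppSqDeriv (lowerLimit b ^ 2) := by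
    rw [oppSqDeriv_integrandTriangle_lowerLimit_sq hb₀ (by linarith)]
    positivity
  rw [primitive_of_oppSq_eq_zero _ (oppSq_integrandTriangle_lowerLimit_sq hb₀ (by linarith)) hP',
    discr_integrandTriangle, abs_q₁_integrandTriangle hb₀ (by linarith)]
  simp only [integrandTriangle]
  field_simp
  ring

lemma integral_angle_integrandTriangle (hb₀ : 1 / 4 < b) (hb₁ : b < 1 / 2) :
    ∫ u in lowerLimit b ^ 2..1, (integrandTriangle b).angle u =
      -((1 - 2 * b) / b) * arctan √(4 * b - 1)
        + (1 - 2 * b) / (2 * b * (1 - b)) * √(4 * b - 1)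
        - b * (1 - 2 * b) / (1 - b) ^ 2 * arctan ((1 - 3 * b) / ((1 - b) * √(4 * b - 1)))
        + b * (1 - 2 * b) / (1 - b) ^ 2 * (π / 2) := by
  have hb : 0 < b := by linarith
  have h₂ : 0 < 1 - 2 * b := by linarith
  have ht : 0 < 4 * b - 1 := by linarith
  rw [(integrandTriangle b).integral_angle (neg_ne_zero.2 (by positivity))
    (q₁_integrandTriangle_ne_zero hb (by linarith)) (lowerLimit_sq_lt_one hb₀ hb₁).le
    (oppSq_integrandTriangle_lowerLimit_sq hb (by linarith)).ge
    (by rw [oppSq_integrandTriangle_one]; positivity)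
    fun u hu => (adj_integrandTriangle_pos hb hb₁ hu.2).ne',
    primitive_integrandTriangle_one hb₀ hb₁, primitive_integrandTriangle_lowerLimit_sq hb hb₁,
    sub_neg_eq_add]

lemma arctan_div_sqrt_eq_pi_div_two_sub (hb₀ : 1 / 4 < b) (hb₁ : b < 1) :
    arctan ((1 - 3 * b) / ((1 - b) * √(4 * b - 1))) = π / 2 - 3 * arctan √(4 * b - 1) := by
  have hsq : √(4 * b - 1) ^ 2 = 4 * b - 1 := sq_sqrt (by linarith)
  have hnum : 1 - 3 * √(4 * b - 1) ^ 2 = 4 * (1 - 3 * b) := by linear_combination -3 * hsq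
  have hden : 3 * √(4 * b - 1) - √(4 * b - 1) ^ 3 = 4 * ((1 - b) * √(4 * b - 1)) := by
    linear_combination (-√(4 * b - 1)) * hsq
  rw [← arctan_div_eq_pi_div_two_sub_three_mul_arctan (sqrt_pos.2 (by linarith))
    (sqrt_lt_sqrt (by linarith) (by linarith)), hnum, hden, mul_div_mul_left _ _ four_ne_zero]

end

theorem integral_r_arctan (b : ℝ) (hb1 : 1/4 < b) (hb2 : b < 1/2)
    (hb3 : b < (3 - Real.sqrt 5)/2) :
    (∫ r in ((1 - 2*b - b ^ ((3:ℝ)/2)) / (Real.sqrt b * (1 - b)))..1,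
        r * arctan (Real.sqrt (4*b^4*r^2 - (1 - 3*b + b^2 - b*(1 - b)*r^2)^2)
          / (1 - b - b^2 - b*(1 - b)*r^2))) =
      π*(1 - 2*b)*(b + 1)/(8*(1 - b)^2)
      + (1 - 2*b)/(4*b*(1 - b)) * Real.sqrt (4*b - 1)
      - (b + 2)*(1 - 2*b)/(4*b*(1 - b)) * arctan (Real.sqrt (4*b - 1))
      - (1 + b)*(1 - 2*b)/(4*(1 - b)^2)
          * arctan ((1 - 3*b)/((1 - b) * Real.sqrt (4*b - 1))) := by
  have hb : 0 < b := by linarith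
  have h₁ : 0 < 1 - b := by linarith
  calc _ = ∫ r in lowerLimit b..1, r * (integrandTriangle b).angle (r ^ 2) := by
        simp only [angle_integrandTriangle, lowerLimit]
    _ = (∫ u in lowerLimit b ^ 2..1, (integrandTriangle b).angle u) / 2 := by
        rw [integral_mul_comp_sq (lowerLimit_pos hb hb3).le zero_le_one, one_pow]
    _ = _ := by
        rw [integral_angle_integrandTriangle hb1 hb2,
          arctan_div_sqrt_eq_pi_div_two_sub hb1 (by linarith)]
        field_simp
        ring
end
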